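/- arXiv:2506.22263 — 2 statements merged into one kernel-verified Lean document; each statement's English description precedes it below -/
import Mathlib

section
/- Let n ≥ 3 and c ≥ n − 2, and let D̃_n be the weighted digraph on vertices x_1, …, x_n with edges (x_i, x_{i+1}) of weight 1 for 1 ≤ i ≤ n−1, edge (x_n, x_1) of weight c, and edge (x_1, x_n) of weight 1. Then for all indices 1 ≤ j < k < l ≤ n, the walk-length filtration value satisfies f_{D̃_n}({x_j, x_k, x_l}) = l − j. In particular, f_{D̃_n}({x_1, x_j, x_n}) = n − 1 for every 1 < j < n. -/
/-!
A walk visiting three distinct vertices has at least two edges, all of weight at least `1`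
(as `c ≥ n - 2 ≥ 1`). If it uses the edge `(x_n, x_1)`, its weight is therefore at least
`(n - 2) + 1 = n - 1`. If it does not, then either it uses the edge `(x_1, x_n)`, in which case
it can neither be extended before `x_1` nor after `x_n` and visits only two vertices, or it runs
through consecutive vertices, in which case reaching both `x_j` and `x_l` costs at least `l - j`.
This trichotomy is `modCycle_walk_cases`, by induction on the walk. The bound is attained by the
walk `x_j, x_{j+1}, …, x_l` (`modCycle_exists_walk`).
-/

open scoped ENNReal NNReal

variable {V : Type*}

/-- The weight of a walk, given as a list of vertices: the sum of the weights of
consecutive pairs. -/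
noncomputable def walkWeight (w : V → V → ℝ≥0) (l : List V) : ℝ≥0∞ :=
  ((l.zip l.tail).map fun p => (w p.1 p.2 : ℝ≥0∞)).sum

/-- A walk in the digraph with edge relation `E`: a nonempty list of vertices in which
every consecutive pair is an edge. -/
def IsWalk (E : V → V → Prop) (l : List V) : Prop :=
  l ≠ [] ∧ l.Chain' E

/-- The walk-length filtration value of a set of vertices: the infimum of the weights of
walks containing all vertices of `σ` (`∞` if there is no such walk). -/
noncomputable def wlf (E : V → V → Prop) (w : V → V → ℝ≥0) (σ : Set V) : ℝ≥0∞ :=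
  ⨅ (l : List V) (_ : IsWalk E l ∧ ∀ v ∈ σ, v ∈ l), walkWeight w l

/-- The edges of the modified cycle digraph `D̃_n` on vertices `x_1, …, x_n`, here indexed
by `Fin n` (`0`-based): edges `(x_i, x_{i+1})` for `1 ≤ i ≤ n-1`, the edge `(x_n, x_1)`,
and the edge `(x_1, x_n)`. -/
def modCycleEdge (n : ℕ) (i j : Fin n) : Prop :=
  (i : ℕ) + 1 = (j : ℕ) ∨ ((i : ℕ) = n - 1 ∧ (j : ℕ) = 0) ∨ ((i : ℕ) = 0 ∧ (j : ℕ) = n - 1)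

/-- The edge weights of `D̃_n`: the edge `(x_n, x_1)` has weight `c`, all other edges
have weight `1`. -/
noncomputable def modCycleWeight (n : ℕ) (c : ℝ≥0) (i j : Fin n) : ℝ≥0 :=
  if (i : ℕ) = n - 1 ∧ (j : ℕ) = 0 then c else 1

theorem walkWeight_cons_cons (w : V → V → ℝ≥0) (a b : V) (t : List V) :
    walkWeight w (a :: b :: t) = (w a b : ℝ≥0∞) + walkWeight w (b :: t) := by
  simp [walkWeight]

theorem one_le_modCycleWeight {n : ℕ} {c : ℝ≥0} (hc : 1 ≤ c) (a b : Fin n) :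
    1 ≤ modCycleWeight n c a b := by
  unfold modCycleWeight
  split_ifs
  · exact hc
  · exact le_rfl

theorem length_le_walkWeight {n : ℕ} {c : ℝ≥0} (hc : 1 ≤ c) (t : List (Fin n)) (a : Fin n) :
    (t.length : ℝ≥0∞) ≤ walkWeight (modCycleWeight n c) (a :: t) := by
  induction t generalizing a with
  | nil => simp
  | cons b t ih =>
    rw [walkWeight_cons_cons, List.length_cons, Nat.cast_add, Nat.cast_one, add_comm]
    exact add_le_add (by exact_mod_cast one_le_modCycleWeight hc a b) (ih b)

/-- The three kinds of walks starting at `a`. Either the walk uses the edge `(x_n, x_1)`, and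
its weight is at least `n - 2` plus the number of remaining edges (written additively to avoid
subtracting from the length); or it runs upwards through consecutive vertices; or it starts with
the edge `(x_1, x_n)` and ends there. In the last case the starting vertex is recorded because
only the edge `(x_n, x_1)` leads into it. -/
theorem modCycle_walk_cases {n : ℕ} (hn : 3 ≤ n) {c : ℝ≥0} (hc : ((n - 2 : ℕ) : ℝ≥0) ≤ c)
    (t : List (Fin n)) (a : Fin n) (h : (a :: t).IsChain (modCycleEdge n)) :
    (((n - 2 + t.length : ℕ) : ℝ≥0∞) ≤ walkWeight (modCycleWeight n c) (a :: t) + 1)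
      ∨ (∀ u ∈ a :: t, a ≤ u ∧
          ((u : ℕ) : ℝ≥0∞) ≤ ((a : ℕ) : ℝ≥0∞) + walkWeight (modCycleWeight n c) (a :: t))
      ∨ ((a : ℕ) = 0 ∧ ∀ u ∈ a :: t, (u : ℕ) = 0 ∨ (u : ℕ) = n - 1) := by
  have hc1 : 1 ≤ c := le_trans (by exact_mod_cast (by omega : 1 ≤ n - 2)) hc
  induction t generalizing a with
  | nil =>
    right; left
    simp
  | cons b t ih =>
    rw [List.isChain_cons_cons] at h
    obtain ⟨hab, ht⟩ := h
    rw [walkWeight_cons_cons]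
    by_cases hback : (a : ℕ) = n - 1 ∧ (b : ℕ) = 0
    · left
      have hw : modCycleWeight n c a b = c := by simp [modCycleWeight, hback]
      rw [hw, List.length_cons, ← add_assoc, Nat.cast_add, Nat.cast_add, Nat.cast_one]
      gcongr
      · exact_mod_cast hc
      · exact length_le_walkWeight hc1 t b
    · have hw : modCycleWeight n c a b = 1 := by simp only [modCycleWeight, if_neg hback]
      rw [hw, ENNReal.coe_one]
      rcases ih b ht with h1 | h2 | ⟨hb, -⟩
      · left
        rw [List.length_cons, ← add_assoc, Nat.cast_add, Nat.cast_one,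
          add_comm 1 (walkWeight _ _)]
        gcongr
      · rcases hab with hs | hs | hs
        · right; left
          have hba : ((b : ℕ) : ℝ≥0∞) = ((a : ℕ) : ℝ≥0∞) + 1 := by
            rw [← hs]; push_cast; rfl
          intro u hu
          rcases List.mem_cons.1 hu with rfl | hu
          · exact ⟨le_rfl, le_self_add⟩
          · obtain ⟨hl, hr⟩ := h2 u hu
            refine ⟨by rw [Fin.le_def] at *; omega, ?_⟩
            rwa [hba, add_assoc] at hr
        · exact absurd hs hback
        · right; right
          refine ⟨hs.1, fun u hu => ?_⟩
          rcases List.mem_cons.1 hu with rfl | hu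
          · exact Or.inl hs.1
          · have := (h2 u hu).1
            rw [Fin.le_def] at this
            omega
      · unfold modCycleEdge at hab
        omega

theorem modCycle_exists_walk {n : ℕ} (c : ℝ≥0) (m : ℕ) (a b : Fin n) (hab : (a : ℕ) + m = b) :
    ∃ t : List (Fin n), (a :: t).IsChain (modCycleEdge n) ∧
      (∀ u, a ≤ u → u ≤ b → u ∈ a :: t) ∧ walkWeight (modCycleWeight n c) (a :: t) = m := by
  induction m generalizing a with
  | zero =>
    refine ⟨[], by simp, fun u h1 h2 => ?_, by simp [walkWeight]⟩
    rw [Fin.le_def] at h1 h2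
    simp only [List.mem_singleton, Fin.ext_iff]
    omega
  | succ m ih =>
    obtain ⟨t, h1, h2, h3⟩ := ih ⟨a + 1, by omega⟩ (by simp only; omega)
    refine ⟨⟨a + 1, by omega⟩ :: t, ?_, ?_, ?_⟩
    · rw [List.isChain_cons_cons]
      exact ⟨Or.inl rfl, h1⟩
    · intro u hu hu'
      rcases eq_or_lt_of_le hu with rfl | hlt
      · simp
      · exact List.mem_cons_of_mem _ (h2 u (by rw [Fin.lt_def] at hlt; rw [Fin.le_def]; exact hlt) hu')
    · rw [walkWeight_cons_cons, h3]
      simp [modCycleWeight, add_comm]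

theorem wlf_modCycle_triple {n : ℕ} (hn : 3 ≤ n) {c : ℝ≥0} (hc : ((n - 2 : ℕ) : ℝ≥0) ≤ c)
    (j k l : Fin n) (hjk : j < k) (hkl : k < l) :
    wlf (modCycleEdge n) (modCycleWeight n c) {j, k, l}
      = (((l : ℕ) - (j : ℕ) : ℕ) : ℝ≥0∞) := by
  have hjk' := Fin.lt_def.1 hjk
  have hkl' := Fin.lt_def.1 hkl
  apply le_antisymm
  · obtain ⟨t, h1, h2, h3⟩ := modCycle_exists_walk c ((l : ℕ) - j) j l (by omega)
    rw [← h3]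
    refine iInf₂_le _ ⟨⟨by simp, h1⟩, ?_⟩
    rintro v (rfl | rfl | rfl)
    · exact h2 _ le_rfl (hjk.trans hkl).le
    · exact h2 _ hjk.le hkl.le
    · exact h2 _ (hjk.trans hkl).le le_rfl
  · refine le_iInf₂ fun p hp => ?_
    obtain ⟨⟨hne, hch⟩, hmem⟩ := hp
    have hj := hmem j (by simp)
    have hk := hmem k (by simp)
    have hl := hmem l (by simp)
    obtain ⟨a, t, rfl⟩ := List.exists_cons_of_ne_nil hne
    rcases modCycle_walk_cases hn hc t a hch with h1 | h2 | ⟨-, h3⟩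
    · have hlen : 3 ≤ (a :: t).length := by
        have hsub : ({j, k, l} : Finset (Fin n)) ⊆ (a :: t).toFinset := by
          intro v hv
          simp only [Finset.mem_insert, Finset.mem_singleton] at hv
          rw [List.mem_toFinset]
          rcases hv with rfl | rfl | rfl <;> assumption
        have hcard : ({j, k, l} : Finset (Fin n)).card = 3 :=
          Finset.card_eq_three.2 ⟨j, k, l, hjk.ne, (hjk.trans hkl).ne, hkl.ne, rfl⟩
        have := (Finset.card_le_card hsub).trans (List.toFinset_card_le _)
        omega
      rw [List.length_cons] at hlen
      have hle : (((l : ℕ) - (j : ℕ) + 1 : ℕ) : ℝ≥0∞) ≤ ((n - 2 + t.length : ℕ) : ℝ≥0∞) := by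
        exact_mod_cast (by omega : (l : ℕ) - (j : ℕ) + 1 ≤ n - 2 + t.length)
      have := hle.trans h1
      rw [Nat.cast_add, Nat.cast_one] at this
      exact (ENNReal.add_le_add_iff_right ENNReal.one_ne_top).1 this
    · have haj := Fin.le_def.1 (h2 j hj).1
      rw [ENNReal.natCast_sub, tsub_le_iff_left]
      refine (h2 l hl).2.trans ?_
      gcongr
    · have := h3 j hj
      have := h3 k hk
      have := h3 l hl
      omega

/-- In `D̃_n` (with `n ≥ 3` and `c ≥ n − 2`), the walk-length filtration value of any
triple `{x_j, x_k, x_l}` with `j < k < l` is `l − j`; in particular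
`f({x_1, x_j, x_n}) = n − 1` for `1 < j < n`. -/
theorem stmt15 (n : ℕ) (hn : 3 ≤ n) (c : ℝ≥0) (hc : (n : ℝ) - 2 ≤ (c : ℝ)) :
    (∀ j k l : Fin n, j < k → k < l →
        wlf (modCycleEdge n) (modCycleWeight n c) {j, k, l}
          = (((l : ℕ) - (j : ℕ) : ℕ) : ℝ≥0∞))
      ∧ ∀ j : Fin n, (⟨0, by omega⟩ : Fin n) < j → j < (⟨n - 1, by omega⟩ : Fin n) →
        wlf (modCycleEdge n) (modCycleWeight n c)
            {(⟨0, by omega⟩ : Fin n), j, (⟨n - 1, by omega⟩ : Fin n)}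
          = ((n - 1 : ℕ) : ℝ≥0∞) := by
  have hc' : ((n - 2 : ℕ) : ℝ≥0) ≤ c := by
    rw [← NNReal.coe_le_coe, NNReal.coe_natCast, Nat.cast_sub (by omega)]
    exact_mod_cast hc
  refine ⟨wlf_modCycle_triple hn hc', fun j h0 h1 => ?_⟩
  simpa using wlf_modCycle_triple hn hc' _ j _ h0 h1
end

section
/- Let n ≥ 3 and c ≥ n − 2, and let D̃_n be the weighted digraph on vertices x_1, …, x_n with edges (x_i, x_{i+1}) of weight 1 for 1 ≤ i ≤ n−1, edge (x_n, x_1) of weight c, and edge (x_1, x_n) of weight 1. Then for all indices 1 ≤ p < q ≤ n with (p, q) ≠ (1, n), the walk-length filtration value satisfies f_{D̃_n}({x_p, x_q}) = q − p, while f_{D̃_n}({x_1, x_n}) = 1. -/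
/-!
Call `(x_n, x_1)` the return edge; its weight is `c ≥ n - 2`. For `(p, q) ≠ (1, n)` we have
`q - p ≤ n - 2 ≤ c`, so a walk through the return edge already weighs at least `q - p`. Along a walk
avoiding it the indices increase, hence such a walk meets `x_p` before `x_q`. The shortcut
`(x_1, x_n)` can then only be used by a walk that starts at `x_1` and immediately ends at `x_n`, so
between `x_p` and `x_q` every step has length one and weight one, which gives weight at least
`q - p` (`le_walkWeight_from_head`, `le_walkWeight_of_mem`). The straight path from `x_p` to `x_q`
attains this value (`exists_straight_walk`).

For `{x_1, x_n}` the shortcut is a walk of weight `1`, and a walk through two distinct vertices has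
at least one edge, each edge weighing at least `1` because `c ≥ n - 2 ≥ 1`.
-/

open scoped ENNReal NNReal

variable {V : Type*}

theorem walkWeight_singleton (w : V → V → ℝ≥0) (a : V) : walkWeight w [a] = 0 := by
  simp [walkWeight]

theorem isWalk_cons_cons {E : V → V → Prop} {a b : V} {t : List V} :
    IsWalk E (a :: b :: t) ↔ E a b ∧ IsWalk E (b :: t) := by
  simp [IsWalk, List.Chain']

theorem isWalk_singleton (E : V → V → Prop) (a : V) : IsWalk E [a] := by
  simp [IsWalk, List.Chain']

/-- A walk from `a` that is lighter than the return edge only meets vertices `v ≥ a`, and it needs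
weight `v - a` to reach `v`, unless it is the shortcut from the first to the last vertex. -/
theorem le_walkWeight_from_head {n : ℕ} (c : ℝ≥0) (v : Fin n) (t : List (Fin n)) :
    ∀ a : Fin n, IsWalk (modCycleEdge n) (a :: t) → v ∈ a :: t →
      (c : ℝ≥0∞) ≤ walkWeight (modCycleWeight n c) (a :: t) ∨
        (a ≤ v ∧ ((((v : ℕ) - (a : ℕ) : ℕ) : ℝ≥0∞) ≤ walkWeight (modCycleWeight n c) (a :: t) ∨
          ((a : ℕ) = 0 ∧ (v : ℕ) = n - 1))) := by
  induction t with
  | nil =>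
    intro a _ hv
    obtain rfl : v = a := by simpa using hv
    right
    simp
  | cons b t ih =>
    intro a hw hv
    rcases List.mem_cons.1 hv with rfl | hv
    · right
      simp
    obtain ⟨hab, hw⟩ := isWalk_cons_cons.1 hw
    rw [walkWeight_cons_cons]
    by_cases hret : (a : ℕ) = n - 1 ∧ (b : ℕ) = 0
    · left
      simp [modCycleWeight, hret]
    have hone : modCycleWeight n c a b = 1 := by simp only [modCycleWeight, if_neg hret]
    rw [hone]
    rcases ih b hw hv with h | ⟨hbv, h⟩
    · exact Or.inl (h.trans le_add_self)
    right
    rw [Fin.le_def] at hbv ⊢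
    rcases hab with hab | hab | hab
    · refine ⟨by omega, Or.inl ?_⟩
      rcases h with h | h
      · have e : (v : ℕ) - (a : ℕ) = 1 + ((v : ℕ) - (b : ℕ)) := by omega
        rw [e]
        push_cast
        gcongr
        simpa using h
      · omega
    · exact absurd hab hret
    · have := v.isLt
      exact ⟨by omega, Or.inr ⟨hab.1, by omega⟩⟩

/-- The lower bound for a walk through `p < q`, by deleting initial vertices until the walk starts
at `p` or at `q`. -/
theorem le_walkWeight_of_mem {n : ℕ} (c : ℝ≥0) (p q : Fin n) (hpq : p < q)
    (hne : ¬((p : ℕ) = 0 ∧ (q : ℕ) = n - 1)) (l : List (Fin n)) :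
    IsWalk (modCycleEdge n) l → p ∈ l → q ∈ l →
      (c : ℝ≥0∞) ≤ walkWeight (modCycleWeight n c) l ∨
        (((q : ℕ) - (p : ℕ) : ℕ) : ℝ≥0∞) ≤ walkWeight (modCycleWeight n c) l := by
  induction l with
  | nil => simp
  | cons a t ih =>
    intro hw hp hq
    by_cases hap : p = a
    · subst hap
      rcases le_walkWeight_from_head c q t p hw hq with h | ⟨_, h | h⟩
      · exact Or.inl h
      · exact Or.inr h
      · exact absurd h hne
    by_cases haq : q = a
    · subst haq
      rcases le_walkWeight_from_head c p t q hw hp with h | ⟨h, _⟩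
      · exact Or.inl h
      · exact absurd h (not_le.2 hpq)
    have hp' : p ∈ t := (List.mem_cons.1 hp).resolve_left hap
    have hq' : q ∈ t := (List.mem_cons.1 hq).resolve_left haq
    cases t with
    | nil => simp at hp'
    | cons b t =>
      rw [walkWeight_cons_cons]
      rcases ih (isWalk_cons_cons.1 hw).2 hp' hq' with h | h
      · exact Or.inl (h.trans le_add_self)
      · exact Or.inr (h.trans le_add_self)

theorem exists_straight_walk {n : ℕ} (c : ℝ≥0) (q : Fin n) (k : ℕ) :
    ∀ p : Fin n, (p : ℕ) + k = q → ∃ t : List (Fin n), IsWalk (modCycleEdge n) (p :: t) ∧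
      q ∈ p :: t ∧ walkWeight (modCycleWeight n c) (p :: t) = (k : ℝ≥0∞) := by
  induction k with
  | zero =>
    intro p hp
    obtain rfl : p = q := Fin.ext hp
    exact ⟨[], isWalk_singleton _ _, by simp, by simp [walkWeight_singleton]⟩
  | succ k ih =>
    intro p hp
    have hlt : (p : ℕ) + 1 < n := by have := q.isLt; omega
    obtain ⟨t, hw, hq, hk⟩ := ih ⟨p + 1, hlt⟩ (by simp only; omega)
    refine ⟨_ :: t, isWalk_cons_cons.2 ⟨Or.inl rfl, hw⟩, List.mem_cons_of_mem _ hq, ?_⟩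
    rw [walkWeight_cons_cons, hk]
    simp [modCycleWeight, add_comm]

/-- In `D̃_n` (with `n ≥ 3` and `c ≥ n − 2`), the walk-length filtration value of a pair
`{x_p, x_q}` with `p < q` and `(p, q) ≠ (1, n)` is `q − p`, while
`f({x_1, x_n}) = 1`. -/
theorem stmt16 (n : ℕ) (hn : 3 ≤ n) (c : ℝ≥0) (hc : (n : ℝ) - 2 ≤ (c : ℝ)) :
    (∀ p q : Fin n, p < q → ¬((p : ℕ) = 0 ∧ (q : ℕ) = n - 1) →
        wlf (modCycleEdge n) (modCycleWeight n c) {p, q}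
          = (((q : ℕ) - (p : ℕ) : ℕ) : ℝ≥0∞))
      ∧ wlf (modCycleEdge n) (modCycleWeight n c)
            {(⟨0, by omega⟩ : Fin n), (⟨n - 1, by omega⟩ : Fin n)} = 1 := by
  have hcn : ((n - 2 : ℕ) : ℝ≥0) ≤ c := by
    rw [← NNReal.coe_le_coe]
    rw [NNReal.coe_natCast, Nat.cast_sub (by omega)]
    exact hc
  refine ⟨fun p q hpq hne => le_antisymm ?_ ?_, le_antisymm ?_ ?_⟩
  · rw [Fin.lt_def] at hpq
    obtain ⟨t, hw, hq, hk⟩ := exists_straight_walk c q ((q : ℕ) - (p : ℕ)) p (by omega)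
    rw [← hk]
    refine iInf₂_le (p :: t) ⟨hw, ?_⟩
    rintro v (rfl | rfl)
    · simp
    · exact hq
  · refine le_iInf₂ fun l hl => ?_
    rcases le_walkWeight_of_mem c p q hpq hne l hl.1 (hl.2 p (by simp)) (hl.2 q (by simp))
      with h | h
    · refine le_trans ?_ h
      have hle : (q : ℕ) - (p : ℕ) ≤ n - 2 := by have := q.isLt; omega
      have : (((q : ℕ) - (p : ℕ) : ℕ) : ℝ≥0) ≤ c := le_trans (Nat.cast_le.2 hle) hcn
      exact_mod_cast this
    · exact h
  · refine le_trans (iInf₂_le [(⟨0, by omega⟩ : Fin n), ⟨n - 1, by omega⟩] ⟨isWalk_cons_cons.2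
      ⟨Or.inr (Or.inr ⟨rfl, rfl⟩), isWalk_singleton _ _⟩, by rintro v (rfl | rfl) <;> simp⟩) ?_
    rw [walkWeight_cons_cons, walkWeight_singleton, modCycleWeight, if_neg (by simp only; omega)]
    simp
  · refine le_iInf₂ fun l hl => ?_
    have h0 := hl.2 ⟨0, by omega⟩ (by simp)
    have h1 := hl.2 ⟨n - 1, by omega⟩ (by simp)
    have hc1 : 1 ≤ c := le_trans (by exact_mod_cast (show 1 ≤ n - 2 by omega)) hcn
    match l, h0, h1 with
    | [a], h0, h1 =>
      -- a one-vertex walk cannot meet both ends, since `n - 1 ≠ 0`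
      rw [List.mem_singleton] at h0 h1
      have := congrArg Fin.val (h0.trans h1.symm)
      simp only at this
      omega
    | a :: b :: t, _, _ =>
      rw [walkWeight_cons_cons]
      refine le_trans ?_ le_self_add
      have : 1 ≤ modCycleWeight n c a b := by
        unfold modCycleWeight
        split_ifs
        · exact hc1
        · exact le_rfl
      exact_mod_cast this
end
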